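/- For every δ ∈ (0,π) there exists a constant C = C(δ) > 0 with the following property. Let E be a real inner product space, let Q, P, S ∈ E be unit vectors, and set x := arccos⟨Q,S⟩ and y := arccos⟨Q,P⟩; assume x, y ∈ (0, π−δ]. For η, η' ∈ [0,1] let S_η := γ_{S,Q}(η) and P_{η'} := γ_{P,Q}(η'). Then d_S(P_{η'}, S_η)² ≤ (sin²((1−η)x)/sin² x)·(d_S(P,S)² − (x−y)²) + ((1−η)(x−y) + (η'−η)x)² + C·(d_S(P,S) + |x−y| + |η−η'|)³. -/

import Mathlib

open scoped RealInnerProductSpace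

/-- The spherical geodesic interpolation point `γ_{A,B}(t)` between unit vectors `A` and `B`:
`γ_{A,B}(t) = (sin((1−t)θ)·A + sin(tθ)·B)/sin θ` where `θ = arccos⟨A,B⟩`. -/
noncomputable def sphGeo {E : Type*} [NormedAddCommGroup E] [InnerProductSpace ℝ E]
    (A B : E) (t : ℝ) : E :=
  (Real.sin (Real.arccos ⟪A, B⟫))⁻¹ •
    (Real.sin ((1 - t) * Real.arccos ⟪A, B⟫) • A + Real.sin (t * Real.arccos ⟪A, B⟫) • B)

namespace SphEst

lemma aux_deriv (u : ℝ) (hu : 0 < u) : |u * Real.cos u - Real.sin u| ≤ 2 * u ^ 2 := by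
  have h1 := Real.sin_le hu.le
  have h2 := Real.one_sub_sq_div_two_le_cos (x := u)
  have h3 := Real.cos_le_one u
  have h4 := Real.neg_one_le_cos u
  have h5 := Real.neg_one_le_sin u
  rw [abs_le]
  constructor
  · by_cases h : u ≤ 2
    · nlinarith [mul_le_mul_of_nonneg_left h2 hu.le, mul_nonneg (sq_nonneg u) (sub_nonneg.2 h)]
    · push Not at h
      nlinarith [mul_le_mul_of_nonneg_left h4 hu.le]
  · by_cases h : u ≤ 1
    · have h6 := Real.sin_gt_sub_cube hu
      nlinarith [mul_le_mul_of_nonneg_left h3 hu.le, mul_nonneg (sq_nonneg u) (sub_nonneg.2 h)]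
    · push Not at h
      nlinarith [mul_le_mul_of_nonneg_left h3 hu.le]

lemma lip (x y : ℝ) (hx : 0 < x) (hy : 0 < y) :
    |Real.sin x / x - Real.sin y / y| ≤ 2 * |x - y| := by
  have := Convex.norm_image_sub_le_of_norm_hasDerivWithin_le (𝕜 := ℝ) (s := Set.Ioi (0:ℝ))
    (f := fun u => Real.sin u / u) (f' := fun u => (Real.cos u * u - Real.sin u * 1) / u ^ 2)
    (C := 2) (x := y) (y := x) ?_ ?_ (convex_Ioi 0) hy hx
  · simpa [Real.norm_eq_abs] using this
  · intro u hu
    have hu : 0 < u := hu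
    exact ((Real.hasDerivAt_sin u).div (hasDerivAt_id u) hu.ne').hasDerivWithinAt
  · intro u hu
    have hu : 0 < u := hu
    rw [Real.norm_eq_abs, abs_div, abs_of_pos (show 0 < u ^ 2 by positivity),
      div_le_iff₀ (by positivity)]
    have := aux_deriv u hu
    rwa [mul_comm (Real.cos u), mul_one]

/-- lower bound for sin -/
lemma sin_lower (δ : ℝ) (h0 : 0 < δ) (h1 : δ < Real.pi) : ∃ m : ℝ, 0 < m ∧
    ∀ x, 0 < x → x ≤ Real.pi - δ → m * x ≤ Real.sin x := by
  have hr : 0 < Real.pi - δ := by linarith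
  have hs : 0 < Real.sin (Real.pi - δ) := Real.sin_pos_of_pos_of_lt_pi hr (by linarith)
  refine ⟨Real.sin (Real.pi - δ) / (Real.pi - δ), by positivity, fun x hx hx2 => ?_⟩
  have hc := strictConcaveOn_sin_Icc.concaveOn.2
    (show (0:ℝ) ∈ Set.Icc 0 Real.pi from ⟨le_rfl, Real.pi_pos.le⟩)
    (show Real.pi - δ ∈ Set.Icc 0 Real.pi from ⟨hr.le, by linarith⟩)
    (show 0 ≤ 1 - x / (Real.pi - δ) by rw [sub_nonneg, div_le_one hr]; exact hx2)
    (show 0 ≤ x / (Real.pi - δ) by positivity)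
    (by ring)
  simp only [smul_eq_mul, Real.sin_zero, mul_zero, zero_add] at hc
  rw [div_mul_cancel₀ _ hr.ne'] at hc
  calc _ = x / (Real.pi - δ) * Real.sin (Real.pi - δ) := by ring
    _ ≤ _ := hc

lemma g_lip (m x y s t : ℝ) (hm : 0 < m) (hx : 0 < x) (hy : 0 < y)
    (hs : 0 ≤ s) (hs1 : s ≤ 1) (hmx : m * x ≤ Real.sin x) (hmy : m * y ≤ Real.sin y) :
    |Real.sin (t * y) / Real.sin y - Real.sin (s * x) / Real.sin x|
      ≤ (2 / m + 2 / m ^ 2) * (|x - y| + |s - t|) := by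
  have hsx : 0 < Real.sin x := lt_of_lt_of_le (by positivity) hmx
  have hsy : 0 < Real.sin y := lt_of_lt_of_le (by positivity) hmy
  have hA : |Real.sin (t * y) / Real.sin y - Real.sin (s * y) / Real.sin y| ≤ 1 / m * |s - t| := by
    rw [← sub_div, abs_div, abs_of_pos hsy, div_le_iff₀ hsy]
    have h1 : |Real.sin (t * y) - Real.sin (s * y)| ≤ |t * y - s * y| := by
      have := Real.lipschitzWith_sin.dist_le_mul (t * y) (s * y)
      simpa [Real.dist_eq] using this
    have h2 : |t * y - s * y| = y * |s - t| := by
      rw [← sub_mul, abs_mul, abs_of_pos hy, abs_sub_comm, mul_comm]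
    have h3 : y ≤ 1 / m * Real.sin y := by
      rw [div_mul_eq_mul_div, one_mul, le_div_iff₀ hm]; linarith
    nlinarith [mul_le_mul_of_nonneg_right h3 (abs_nonneg (s - t))]
  have hB : |Real.sin (s * y) / Real.sin y - Real.sin (s * x) / Real.sin x|
      ≤ (2 / m + 2 / m ^ 2) * |x - y| := by
    rcases hs.eq_or_lt with rfl | hs0
    · simp; positivity
    set X := Real.sin x / x with hX
    set Y := Real.sin y / y with hY
    set U := Real.sin (s * x) / (s * x) with hU
    set V := Real.sin (s * y) / (s * y) with hV
    have hXm : m ≤ X := by rw [hX, le_div_iff₀ hx]; exact hmx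
    have hYm : m ≤ Y := by rw [hY, le_div_iff₀ hy]; exact hmy
    have hX0 : 0 < X := by linarith
    have hY0 : 0 < Y := by linarith
    have l1 : |X - Y| ≤ 2 * |x - y| := lip x y hx hy
    have l2 : |V - U| ≤ 2 * |x - y| := by
      have := lip (s * y) (s * x) (by positivity) (by positivity)
      rw [← mul_sub, abs_mul, abs_of_pos hs0, abs_sub_comm y x] at this
      nlinarith [mul_le_mul_of_nonneg_right hs1 (abs_nonneg (x - y))]
    have hU1 : |U| ≤ 1 := by
      rw [hU, abs_div, abs_of_pos (show 0 < s * x by positivity), div_le_one (by positivity)]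
      have := Real.abs_sin_le_abs (x := s * x)
      rwa [abs_of_pos (show 0 < s * x by positivity)] at this
    have e : Real.sin (s * y) / Real.sin y - Real.sin (s * x) / Real.sin x
        = s * ((V - U) / Y + U * (X - Y) / (X * Y)) := by
      have e1 : Real.sin (s * y) / Real.sin y = s * (V / Y) := by
        rw [hV, hY]; field_simp
      have e2 : Real.sin (s * x) / Real.sin x = s * (U / X) := by
        rw [hU, hX]; field_simp
      rw [e1, e2]; field_simp; ring
    rw [e, abs_mul, abs_of_pos hs0]
    have b1 : |(V - U) / Y| ≤ 2 / m * |x - y| := by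
      rw [abs_div, abs_of_pos hY0, div_mul_eq_mul_div]
      exact div_le_div₀ (by positivity) l2 hm hYm
    have b2 : |U * (X - Y) / (X * Y)| ≤ 2 / m ^ 2 * |x - y| := by
      rw [abs_div, abs_of_pos (mul_pos hX0 hY0), div_mul_eq_mul_div (2:ℝ), abs_mul]
      refine div_le_div₀ (by positivity) ?_ (by positivity) ?_
      · nlinarith [abs_nonneg (X - Y), abs_nonneg U]
      · nlinarith
    have b3 := abs_add_le ((V - U) / Y) (U * (X - Y) / (X * Y))
    have b4 : s * |(V - U) / Y + U * (X - Y) / (X * Y)| ≤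
        1 * |(V - U) / Y + U * (X - Y) / (X * Y)| :=
      mul_le_mul_of_nonneg_right hs1 (abs_nonneg _)
    linarith
  have hC := abs_sub_le (Real.sin (t * y) / Real.sin y) (Real.sin (s * y) / Real.sin y)
    (Real.sin (s * x) / Real.sin x)
  have hD : 1 / m * |s - t| ≤ (2 / m + 2 / m ^ 2) * |s - t| := by
    apply mul_le_mul_of_nonneg_right _ (abs_nonneg _)
    have : 0 < 1 / m := by positivity
    have h2 : 0 < 2 / m ^ 2 := by positivity
    have h3 : 2 / m = 1 / m + 1 / m := by ring
    linarith
  linarith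

lemma cos_diff (w D : ℝ) (h : |w| ≤ D) :
    Real.cos w - Real.cos D ≤ (D ^ 2 - w ^ 2) / 2 := by
  have e : Real.cos w - Real.cos D = 2 * (Real.sin ((D + w) / 2) * Real.sin ((D - w) / 2)) := by
    rw [Real.cos_sub_cos, show (w - D) / 2 = -((D - w) / 2) by ring, Real.sin_neg, add_comm w D]
    ring
  rw [abs_le] at h
  have h1 : |Real.sin ((D + w) / 2)| ≤ (D + w) / 2 := by
    have := Real.abs_sin_le_abs (x := (D + w) / 2)
    rwa [abs_of_nonneg (show 0 ≤ (D + w) / 2 by linarith)] at this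
  have h2 : |Real.sin ((D - w) / 2)| ≤ (D - w) / 2 := by
    have := Real.abs_sin_le_abs (x := (D - w) / 2)
    rwa [abs_of_nonneg (show 0 ≤ (D - w) / 2 by linarith)] at this
  have h3 := mul_le_mul h1 h2 (abs_nonneg _) (by linarith)
  rw [← abs_mul] at h3
  have h4 := le_abs_self (Real.sin ((D + w) / 2) * Real.sin ((D - w) / 2))
  rw [e]
  nlinarith

lemma sq_le (d : ℝ) (h0 : 0 ≤ d) (_h1 : d ≤ Real.pi) :
    d ^ 2 ≤ 2 * (1 - Real.cos d) + d ^ 4 := by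
  by_cases h : d ≤ 1
  · have := (abs_le.1 (Real.cos_bound (x := d) (by rwa [abs_of_nonneg h0]))).2
    rw [abs_of_nonneg h0] at this
    have : 0 ≤ d ^ 4 := by positivity
    linarith
  · push Not at h
    have := Real.cos_le_one d
    have h2 : 1 ≤ d ^ 2 := by nlinarith
    nlinarith

lemma sq_le2 (d : ℝ) (h0 : 0 ≤ d) (h1 : d ≤ Real.pi) :
    d ^ 2 ≤ 3 * (2 * (1 - Real.cos d)) := by
  have h := Real.cos_le_one_sub_mul_cos_sq (x := d) (by rwa [abs_of_nonneg h0])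
  have hp : Real.pi ^ 2 ≤ 12 := by nlinarith [Real.pi_lt_d2, Real.pi_pos]
  have h3 : 1 / 6 ≤ 2 / Real.pi ^ 2 := by
    rw [div_le_div_iff₀ (by norm_num) (by positivity)]; linarith
  nlinarith [mul_le_mul_of_nonneg_right h3 (sq_nonneg d)]

set_option maxHeartbeats 1000000 in
lemma real_main (M L : ℝ) (hM : 0 < M) (hL : 0 < L) (x w D k s p q d e : ℝ)
    (hx : 0 < x) (hx4 : x ≤ 4) (hs : 0 ≤ s) (hs1 : s ≤ 1)
    (hwD : |w| ≤ D) (he : e = D + |w| + |k|) (he8 : e ≤ 9)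
    (hq0 : 0 ≤ q) (hqM : q ≤ M) (hp0 : 0 ≤ p) (hpq : |p - q| ≤ L * e)
    (hd0 : 0 ≤ d) (hd : d ≤ Real.pi)
    (h : 1 - Real.cos d ≤ 1 - Real.cos (s * w - k * x + k * w) + p * q * (Real.cos w - Real.cos D)) :
    d ^ 2 ≤ q ^ 2 * (D ^ 2 - w ^ 2) + (s * w - k * x) ^ 2
      + (19 + M * L + 81 * (M ^ 2 + 25 + 9 * (19 + M * L)) ^ 2) * e ^ 3 := by
  have hw0 := abs_nonneg w
  have hk0 := abs_nonneg k
  have he0 : 0 ≤ e := by linarith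
  have hwe : |w| ≤ e := by linarith
  have hke : |k| ≤ e := by linarith
  have hDe : D ≤ e := by linarith
  have hW : 0 ≤ D ^ 2 - w ^ 2 := by nlinarith [sq_abs w]
  have hW2 : D ^ 2 - w ^ 2 ≤ e ^ 2 := by nlinarith [sq_nonneg w]
  have c1 := cos_diff w D hwD
  have c2 := Real.one_sub_sq_div_two_le_cos (x := s * w - k * x + k * w)
  have hT : 2 * (1 - Real.cos d) ≤ (s * w - k * x + k * w) ^ 2 + p * q * (D ^ 2 - w ^ 2) := by
    nlinarith [mul_le_mul_of_nonneg_left c1 (mul_nonneg hp0 hq0)]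
  have hv : |s * w - k * x| ≤ 5 * e := by
    have h1 : |s * w| ≤ e := by
      rw [abs_mul, abs_of_nonneg hs]; nlinarith
    have h2 : |k * x| ≤ 4 * e := by
      rw [abs_mul, abs_of_pos hx]; nlinarith
    have := abs_sub (s * w) (k * x)
    linarith
  have hz : |k * w| ≤ e ^ 2 := by
    rw [abs_mul, sq]; exact mul_le_mul hke hwe hw0 he0
  generalize hvv : s * w - k * x = v at *
  generalize k * w = z at *
  have he3 : e ^ 4 ≤ 9 * e ^ 3 := by nlinarith [pow_nonneg he0 3]
  have he32 : e ^ 3 ≤ 9 * e ^ 2 := by nlinarith [pow_nonneg he0 2]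
  have hu : (v + z) ^ 2 ≤ v ^ 2 + 19 * e ^ 3 := by
    have h1 : |v * z| ≤ 5 * e ^ 3 := by
      rw [abs_mul]
      calc _ ≤ (5 * e) * e ^ 2 := mul_le_mul hv hz (abs_nonneg _) (by positivity)
        _ = _ := by ring
    have h2 : z ^ 2 ≤ e ^ 4 := by
      rw [← sq_abs]
      calc _ ≤ (e ^ 2) ^ 2 := pow_le_pow_left₀ (abs_nonneg _) hz 2
        _ = _ := by ring
    have h3 := le_abs_self (v * z)
    have h4 : (v + z) ^ 2 = v ^ 2 + 2 * (v * z) + z ^ 2 := by ring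
    linarith
  have hpq2 : p * q * (D ^ 2 - w ^ 2) ≤ q ^ 2 * (D ^ 2 - w ^ 2) + M * L * e ^ 3 := by
    have h1 : (p - q) * q ≤ (L * e) * M :=
      mul_le_mul ((le_abs_self _).trans hpq) hqM hq0 (by positivity)
    have h2 : (p - q) * q * (D ^ 2 - w ^ 2) ≤ (L * e) * M * e ^ 2 :=
      (mul_le_mul_of_nonneg_right h1 hW).trans (mul_le_mul_of_nonneg_left hW2 (by positivity))
    have h3 : (p - q) * q * (D ^ 2 - w ^ 2) = p * q * (D ^ 2 - w ^ 2) - q ^ 2 * (D ^ 2 - w ^ 2) := by ring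
    have h4 : (L * e) * M * e ^ 2 = M * L * e ^ 3 := by ring
    linarith
  have hT2 : 2 * (1 - Real.cos d) ≤ q ^ 2 * (D ^ 2 - w ^ 2) + v ^ 2 + (19 + M * L) * e ^ 3 := by
    linarith
  set K := M ^ 2 + 25 + 9 * (19 + M * L) with hK
  have hTK : 2 * (1 - Real.cos d) ≤ K * e ^ 2 := by
    have h1 : q ^ 2 * (D ^ 2 - w ^ 2) ≤ M ^ 2 * e ^ 2 :=
      mul_le_mul (pow_le_pow_left₀ hq0 hqM 2) hW2 hW (by positivity)
    have h2 : v ^ 2 ≤ 25 * e ^ 2 := by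
      rw [← sq_abs]
      calc _ ≤ (5 * e) ^ 2 := pow_le_pow_left₀ (abs_nonneg _) hv 2
        _ = _ := by ring
    have h3 : (19 + M * L) * e ^ 3 ≤ (19 + M * L) * (9 * e ^ 2) :=
      mul_le_mul_of_nonneg_left he32 (by positivity)
    rw [hK]; linarith
  have d2 : d ^ 2 ≤ 3 * (K * e ^ 2) := (sq_le2 d hd0 hd).trans (by linarith)
  have d4 : d ^ 4 ≤ 81 * K ^ 2 * e ^ 3 := by
    calc d ^ 4 = (d ^ 2) ^ 2 := by ring
      _ ≤ (3 * (K * e ^ 2)) ^ 2 := pow_le_pow_left₀ (sq_nonneg d) d2 2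
      _ = 9 * K ^ 2 * e ^ 4 := by ring
      _ ≤ 9 * K ^ 2 * (9 * e ^ 3) := mul_le_mul_of_nonneg_left he3 (by positivity)
      _ = _ := by ring
  have := sq_le d hd0 hd
  linarith

lemma tri {E : Type*} [NormedAddCommGroup E] [InnerProductSpace ℝ E] (Q P S : E)
    (hQ : ‖Q‖ = 1) (hP : ‖P‖ = 1) (hS : ‖S‖ = 1) :
    |Real.arccos ⟪Q, S⟫ - Real.arccos ⟪Q, P⟫| ≤ Real.arccos ⟪P, S⟫ := by
  have e : ∀ A B : E, ‖A‖ = 1 → ‖B‖ = 1 →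
      Real.arccos ⟪A, B⟫ = InnerProductGeometry.angle A B := by
    intro A B hA hB
    simp [InnerProductGeometry.angle, hA, hB]
  rw [e _ _ hQ hS, e _ _ hQ hP, e _ _ hP hS, abs_le]
  have h1 := InnerProductGeometry.angle_le_angle_add_angle Q P S
  have h2 := InnerProductGeometry.angle_le_angle_add_angle Q S P
  rw [InnerProductGeometry.angle_comm S P] at h2
  constructor <;> linarith

lemma geo_eq {E : Type*} [NormedAddCommGroup E] [InnerProductSpace ℝ E] (A Q : E) (x t : ℝ)
    (hx : Real.arccos ⟪Q, A⟫ = x) (hs : Real.sin x ≠ 0) :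
    sphGeo A Q t = (Real.sin ((1 - t) * x) / Real.sin x) • A
      + (Real.cos ((1 - t) * x) - Real.cos x * (Real.sin ((1 - t) * x) / Real.sin x)) • Q := by
  unfold sphGeo
  rw [real_inner_comm, hx, smul_add, smul_smul, smul_smul]
  congr 2
  · field_simp
  · rw [show t * x = x - (1 - t) * x by ring, Real.sin_sub]
    field_simp

end SphEst

open SphEst in
/-- Spherical comparison version of Estimate II for the triangle `QPS` on the
unit sphere of a real inner product space: with `x = arccos⟨Q,S⟫`, `y = arccos⟨Q,P⟫` in
`(0, π−δ]`, `S_η = γ_{S,Q}(η)`, `P_{η'} = γ_{P,Q}(η')`, one has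
`d_S(P_{η'},S_η)² ≤ (sin²((1−η)x)/sin²x)(d_S(P,S)² − (x−y)²) + ((1−η)(x−y) + (η'−η)x)²
+ C(d_S(P,S) + |x−y| + |η−η'|)³`, where `C = C(δ) > 0`. -/
theorem spherical_estimate_II :
    ∀ δ ∈ Set.Ioo (0 : ℝ) Real.pi, ∃ C : ℝ, 0 < C ∧
      ∀ (E : Type*) [NormedAddCommGroup E] [InnerProductSpace ℝ E]
        (Q P S : E), ‖Q‖ = 1 → ‖P‖ = 1 → ‖S‖ = 1 →
        Real.arccos ⟪Q, S⟫ ∈ Set.Ioc 0 (Real.pi - δ) →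
        Real.arccos ⟪Q, P⟫ ∈ Set.Ioc 0 (Real.pi - δ) →
        ∀ η ∈ Set.Icc (0 : ℝ) 1, ∀ η' ∈ Set.Icc (0 : ℝ) 1,
        (Real.arccos ⟪sphGeo P Q η', sphGeo S Q η⟫) ^ 2
          ≤ (Real.sin ((1 - η) * Real.arccos ⟪Q, S⟫)) ^ 2 / (Real.sin (Real.arccos ⟪Q, S⟫)) ^ 2
              * ((Real.arccos ⟪P, S⟫) ^ 2 - (Real.arccos ⟪Q, S⟫ - Real.arccos ⟪Q, P⟫) ^ 2)
            + ((1 - η) * (Real.arccos ⟪Q, S⟫ - Real.arccos ⟪Q, P⟫)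
                + (η' - η) * Real.arccos ⟪Q, S⟫) ^ 2
            + C * (Real.arccos ⟪P, S⟫ + |Real.arccos ⟪Q, S⟫ - Real.arccos ⟪Q, P⟫|
                + |η - η'|) ^ 3 := by
  intro δ hδ
  obtain ⟨m, hm, hsin⟩ := sin_lower δ hδ.1 hδ.2
  set M := 1 / m with hM
  set L := 2 / m + 2 / m ^ 2 with hL
  have hM0 : 0 < M := by positivity
  have hL0 : 0 < L := by positivity
  refine ⟨19 + M * L + 81 * (M ^ 2 + 25 + 9 * (19 + M * L)) ^ 2, by positivity, ?_⟩
  intro E _ _ Q P S hQ hP hS hx hy η hη η' hη'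
  have htri := tri Q P S hQ hP hS
  have hI : ∀ A B : E, ‖A‖ = 1 → ‖B‖ = 1 → Real.cos (Real.arccos ⟪A, B⟫) = ⟪A, B⟫ := by
    intro A B hA hB
    have := abs_le.1 (abs_real_inner_le_norm A B)
    rw [hA, hB] at this
    exact Real.cos_arccos (by linarith [this.1]) (by linarith [this.2])
  have cx := hI Q S hQ hS
  have cy := hI Q P hQ hP
  have cD := hI P S hP hS
  have hDpi := Real.arccos_le_pi ⟪P, S⟫
  have hD0 := Real.arccos_nonneg ⟪P, S⟫
  generalize hxe : Real.arccos ⟪Q, S⟫ = x at *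
  generalize hye : Real.arccos ⟪Q, P⟫ = y at *
  generalize hDe : Real.arccos ⟪P, S⟫ = D at *
  obtain ⟨hx0, hx1⟩ := hx
  obtain ⟨hy0, hy1⟩ := hy
  obtain ⟨hη0, hη1⟩ := hη
  obtain ⟨hη'0, hη'1⟩ := hη'
  have hδ0 := hδ.1
  have hmx := hsin x hx0 hx1
  have hmy := hsin y hy0 hy1
  have hsx : 0 < Real.sin x := lt_of_lt_of_le (by positivity) hmx
  have hsy : 0 < Real.sin y := lt_of_lt_of_le (by positivity) hmy
  have hq0 : 0 ≤ Real.sin ((1 - η) * x) / Real.sin x :=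
    div_nonneg (Real.sin_nonneg_of_nonneg_of_le_pi (mul_nonneg (by linarith) hx0.le)
      (by nlinarith)) hsx.le
  have hp0 : 0 ≤ Real.sin ((1 - η') * y) / Real.sin y :=
    div_nonneg (Real.sin_nonneg_of_nonneg_of_le_pi (mul_nonneg (by linarith) hy0.le)
      (by nlinarith)) hsy.le
  have hqM : Real.sin ((1 - η) * x) / Real.sin x ≤ M := by
    rw [hM, div_le_div_iff₀ hsx hm]
    have := Real.sin_le (show 0 ≤ (1 - η) * x from mul_nonneg (by linarith) hx0.le)
    have h2 : Real.sin ((1 - η) * x) ≤ x := by nlinarith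
    nlinarith
  have hlip := g_lip m x y (1 - η) (1 - η') hm hx0 hy0 (by linarith) (by linarith) hmx hmy
  rw [show (1 - η) - (1 - η') = -(η - η') by ring, abs_neg, ← hL] at hlip
  have hinner : ⟪sphGeo P Q η', sphGeo S Q η⟫ =
      Real.cos ((1 - η) * x - (1 - η') * y)
      - Real.sin ((1 - η') * y) / Real.sin y * (Real.sin ((1 - η) * x) / Real.sin x) *
        (Real.cos (x - y) - Real.cos D) := by
    rw [geo_eq P Q y η' hye hsy.ne', geo_eq S Q x η hxe hsx.ne']
    simp only [inner_add_left, inner_add_right, real_inner_smul_left, real_inner_smul_right]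
    rw [real_inner_comm Q P, ← cx, ← cy, ← cD, real_inner_self_eq_norm_sq, hQ, Real.cos_sub,
      Real.cos_sub]
    field_simp
    ring
  rw [← div_pow]
  have hcos : 0 ≤ Real.cos (x - y) - Real.cos D := by
    rw [← Real.cos_abs (x - y), sub_nonneg]
    exact Real.cos_le_cos_of_nonneg_of_le_pi (abs_nonneg _) hDpi htri
  have hd0 := Real.arccos_nonneg ⟪sphGeo P Q η', sphGeo S Q η⟫
  have hd1 := Real.arccos_le_pi ⟪sphGeo P Q η', sphGeo S Q η⟫
  have hcd : ⟪sphGeo P Q η', sphGeo S Q η⟫ ≤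
      Real.cos (Real.arccos ⟪sphGeo P Q η', sphGeo S Q η⟫) := by
    by_cases h : -1 ≤ ⟪sphGeo P Q η', sphGeo S Q η⟫
    · refine (Real.cos_arccos h ?_).ge
      rw [hinner]
      have := mul_nonneg (mul_nonneg hp0 hq0) hcos
      linarith [Real.cos_le_one ((1 - η) * x - (1 - η') * y)]
    · linarith [Real.neg_one_le_cos (Real.arccos ⟪sphGeo P Q η', sphGeo S Q η⟫)]
  rw [hinner] at hcd
  rw [← hinner] at hcd
  generalize Real.arccos ⟪sphGeo P Q η', sphGeo S Q η⟫ = d at *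
  rw [hinner] at hcd
  have hpi := Real.pi_lt_d2
  have hke : |η - η'| ≤ 1 := by rw [abs_le]; constructor <;> linarith
  have := real_main M L hM0 hL0 x (x - y) D (η - η') (1 - η) _ _ d _ hx0 (by linarith)
    (by linarith) (by linarith) htri rfl (by linarith) hq0 hqM hp0
    (hlip.trans (mul_le_mul_of_nonneg_left (by linarith) hL0.le)) hd0 hd1
    (by
      rw [show (1 - η) * (x - y) - (η - η') * x + (η - η') * (x - y)
        = (1 - η) * x - (1 - η') * y by ring]
      linarith)
  rw [show (1 - η) * (x - y) + (η' - η) * x = (1 - η) * (x - y) - (η - η') * x by ring]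
  exact this
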